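/- Let C be a category with finite limits, X a simplicial object in C, and n, m natural numbers with m > n. Then (cosk_n X)_m is the equalizer of the two maps s, t : ∏_{φ} X_φ → ∏_{α} X_α, where φ ranges over injective order-preserving maps φ : [i] → [m] with i ≤ n (with X_φ := X_i), α ranges over morphisms α : φ → φ' in the category of such injections over [m] (with X_α := X_φ), and on the component indexed by α : φ → φ', s is the projection from X_φ while t is the projection from X_{φ'} followed by α^* : X_{φ'} → X_φ. -/

import Mathlib

open CategoryTheory CategoryTheory.Limits Opposite

namespace Stmt2

/-- The objects of the category `D_m`: injective order-preserving maps `φ : [i] → [m]`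
with `i ≤ n` (encoded by `i : Fin (n+1)` and an injective monotone map
`Fin (i+1) → Fin (m+1)`). -/
def Phi (n m : ℕ) : Type :=
  Σ i : Fin (n + 1), { f : Fin ((i : ℕ) + 1) → Fin (m + 1) // Monotone f ∧ Function.Injective f }

/-- The morphisms of the category `D_m`: injective order-preserving maps `α : [i] → [i']`
commuting with the given injections to `[m]`. -/
def Mor (n m : ℕ) : Type :=
  Σ φ φ' : Phi n m, { g : Fin ((φ.1 : ℕ) + 1) → Fin ((φ'.1 : ℕ) + 1) //
    Monotone g ∧ Function.Injective g ∧ φ'.2.1 ∘ g = φ.2.1 }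

instance (n m : ℕ) : Finite (Phi n m) := by unfold Phi; exact inferInstance
instance (n m : ℕ) : Finite (Mor n m) := by unfold Mor Phi; exact inferInstance

noncomputable instance (n m : ℕ) : Fintype (Phi n m) := Fintype.ofFinite _
noncomputable instance (n m : ℕ) : Fintype (Mor n m) := Fintype.ofFinite _
noncomputable instance (n m : ℕ) : DecidableEq (Phi n m) := Classical.decEq _
noncomputable instance (n m : ℕ) : DecidableEq (Mor n m) := Classical.decEq _

variable {C : Type*} [Category C] [HasFiniteLimits C] (n : ℕ)
  [∀ (F : (SimplexCategory.Truncated n)ᵒᵖ ⥤ C),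
    (SimplexCategory.Truncated.inclusion n).op.HasRightKanExtension F]
  (X : CategoryTheory.SimplicialObject C) (m : ℕ)

/-- `X_φ := X_i` for `φ : [i] → [m]`. -/
def XObj (φ : Phi n m) : C := X.obj (op (SimplexCategory.mk (φ.1 : ℕ)))

/-- The first map `s : ∏_φ X_φ ⟶ ∏_α X_α`; on the component indexed by `α : φ → φ'`
it is the projection from `X_φ`. -/
noncomputable def sMap : (∏ᶜ fun φ : Phi n m => XObj n X m φ) ⟶
    (∏ᶜ fun α : Mor n m => XObj n X m α.1) :=
  Pi.lift fun α => Pi.π (fun φ : Phi n m => XObj n X m φ) α.1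

/-- The second map `t : ∏_φ X_φ ⟶ ∏_α X_α`; on the component indexed by `α : φ → φ'`
it is the projection from `X_{φ'}` followed by `α^*`. -/
noncomputable def tMap : (∏ᶜ fun φ : Phi n m => XObj n X m φ) ⟶
    (∏ᶜ fun α : Mor n m => XObj n X m α.1) :=
  Pi.lift fun α => Pi.π (fun φ : Phi n m => XObj n X m φ) α.2.1 ≫
    X.map (SimplexCategory.mkHom ⟨α.2.2.1, α.2.2.2.1⟩).op

/-- The canonical map `(cosk_n X)_m ⟶ ∏_φ X_φ`, whose `φ`-component (for `φ : [i] → [m]`)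
is the structure map `(cosk_n X)_m ⟶ (cosk_n X)_i` followed by the counit
`(cosk_n X)_i ⟶ X_i` of the adjunction (an isomorphism in degrees `≤ n`). -/
noncomputable def iota :
    ((SimplicialObject.cosk n).obj X).obj (op (SimplexCategory.mk m)) ⟶
      (∏ᶜ fun φ : Phi n m => XObj n X m φ) :=
  Pi.lift fun φ =>
    ((SimplicialObject.cosk n).obj X).map (SimplexCategory.mkHom ⟨φ.2.1, φ.2.2.1⟩).op ≫
      ((SimplicialObject.coskAdj n).counit.app
        ((SimplicialObject.truncation n).obj X)).app
        (op (⟨SimplexCategory.mk (φ.1 : ℕ), by simpa using Fin.is_le φ.1⟩ :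
          SimplexCategory.Truncated n))

/-!
The pointwise formula for right Kan extensions presents `(cosk_n X)_m` as the limit of the `X_k`
over all maps `[k] → [m]` with `k ≤ n`. Taking images makes `D_m` a reflective subcategory of the
category of such maps, so its inclusion is final and the limit may be computed over `D_m`. As for
any functor, a limit over `D_m` is the equalizer of two maps between products indexed by the objects
and by the morphisms of `D_m`.
-/

section EqualizerOfProducts

variable {J : Type*} [Category J] {D : Type*} [Category D] {F : Jᵒᵖ ⥤ D}
  [HasProduct fun j : J => F.obj (op j)]

/-- The map from the point of a cone over `F` to the product of the values of `F`. -/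
noncomputable def coneToPi (c : Cone F) : c.pt ⟶ ∏ᶜ fun j : J => F.obj (op j) :=
  Pi.lift fun j => c.π.app (op j)

@[simp]
lemma coneToPi_π (c : Cone F) (j : J) :
    coneToPi c ≫ Pi.π (fun j : J => F.obj (op j)) j = c.π.app (op j) :=
  Pi.lift_π _ _

variable [HasProduct fun α : Σ i j : J, i ⟶ j => F.obj (op α.1)]

variable (F) in
/-- The map `∏_j F(j) ⟶ ∏_{α : i ⟶ j} F(i)` whose component at `α` is the projection to `F(i)`. -/
noncomputable def sourceMap : (∏ᶜ fun j : J => F.obj (op j)) ⟶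
    ∏ᶜ fun α : Σ i j : J, i ⟶ j => F.obj (op α.1) :=
  Pi.lift fun α => Pi.π (fun j : J => F.obj (op j)) α.1

variable (F) in
/-- The map `∏_j F(j) ⟶ ∏_{α : i ⟶ j} F(i)` whose component at `α` is the projection to `F(j)`
followed by `F(α)`. -/
noncomputable def targetMap : (∏ᶜ fun j : J => F.obj (op j)) ⟶
    ∏ᶜ fun α : Σ i j : J, i ⟶ j => F.obj (op α.1) :=
  Pi.lift fun α => Pi.π (fun j : J => F.obj (op j)) α.2.1 ≫ F.map α.2.2.op

lemma comp_sourceMap_eq_comp_targetMap_iff {T : D} (f : T ⟶ ∏ᶜ fun j : J => F.obj (op j)) :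
    f ≫ sourceMap F = f ≫ targetMap F ↔
      ∀ ⦃i j : J⦄ (α : i ⟶ j), f ≫ Pi.π (fun j : J => F.obj (op j)) i =
        f ≫ Pi.π (fun j : J => F.obj (op j)) j ≫ F.map α.op := by
  refine ⟨fun h i j α => ?_, fun h => Pi.hom_ext _ _ fun ⟨i, j, α⟩ => ?_⟩
  · simpa [sourceMap, targetMap] using h =≫ Pi.π _ ⟨i, j, α⟩
  · simpa [sourceMap, targetMap] using h α

lemma coneToPi_condition (c : Cone F) : coneToPi c ≫ sourceMap F = coneToPi c ≫ targetMap F :=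
  (comp_sourceMap_eq_comp_targetMap_iff _).2 fun i j α => by
    rw [← Category.assoc, coneToPi_π, coneToPi_π, c.w]

/-- The cone over `F` determined by a fork of `sourceMap F` and `targetMap F`. -/
noncomputable def coneOfFork (s : Fork (sourceMap F) (targetMap F)) : Cone F where
  pt := s.pt
  π :=
    { app := fun j => s.ι ≫ Pi.π (fun j : J => F.obj (op j)) j.unop
      naturality := fun j i α => by
        simpa using (comp_sourceMap_eq_comp_targetMap_iff s.ι).1 s.condition α.unop }

lemma comp_coneToPi_eq_iff {c : Cone F} (s : Fork (sourceMap F) (targetMap F)) (l : s.pt ⟶ c.pt) :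
    l ≫ coneToPi c = s.ι ↔ ∀ j, l ≫ c.π.app j = (coneOfFork s).π.app j := by
  refine ⟨fun h j => ?_, fun h => Pi.hom_ext _ _ fun j => ?_⟩
  · rw [← coneToPi_π, ← Category.assoc, h]
    rfl
  · rw [Category.assoc, coneToPi_π]
    exact h (op j)

noncomputable def isLimitForkOfIsLimit {c : Cone F} (hc : IsLimit c) :
    IsLimit (Fork.ofι (coneToPi c) (coneToPi_condition c)) :=
  Fork.IsLimit.mk' _ fun s =>
    ⟨hc.lift (coneOfFork s), (comp_coneToPi_eq_iff s _).2 (hc.fac _),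
      fun h => hc.uniq (coneOfFork s) _ ((comp_coneToPi_eq_iff s _).1 h)⟩

end EqualizerOfProducts

namespace Phi

open SimplexCategory Simplicial

variable {n m : ℕ}

/-- The category `D_m`; its homs are chosen such that `Mor n m` is definitionally
`Σ φ φ' : Phi n m, φ ⟶ φ'`. -/
instance : SmallCategory (Phi n m) where
  Hom φ φ' := { g : Fin ((φ.1 : ℕ) + 1) → Fin ((φ'.1 : ℕ) + 1) //
    Monotone g ∧ Function.Injective g ∧ φ'.2.1 ∘ g = φ.2.1 }
  id φ := ⟨id, monotone_id, Function.injective_id, rfl⟩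
  comp {φ φ' φ''} g h := ⟨h.1 ∘ g.1, h.2.1.comp g.2.1, h.2.2.1.comp g.2.2.1, by
    rw [← Function.comp_assoc, h.2.2.2, g.2.2.2]⟩

noncomputable instance : FinCategory (Phi n m) where
  fintypeHom φ φ' := Fintype.ofFinite
    { g : Fin ((φ.1 : ℕ) + 1) → Fin ((φ'.1 : ℕ) + 1) //
      Monotone g ∧ Function.Injective g ∧ φ'.2.1 ∘ g = φ.2.1 }

/-- The functor `D_m ⥤ Δ` sending `φ : [i] → [m]` to `[i]`. -/
def toSimplexCategory : Phi n m ⥤ SimplexCategory where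
  obj φ := .mk φ.1
  map g := mkHom ⟨g.1, g.2.1⟩

/-- The object `φ : [i] → [m]` of `D_m` as a morphism of the simplex category. -/
def toHom (φ : Phi n m) : toSimplexCategory.obj φ ⟶ ⦋m⦌ :=
  mkHom ⟨φ.2.1, φ.2.2.1⟩

instance (φ : Phi n m) : Mono φ.toHom :=
  mono_iff_injective.2 φ.2.2.2

/-- A monomorphism into `[m]` from a simplex of dimension `≤ n`, as an object of `D_m`. -/
def ofMono {a : SimplexCategory} (i : a ⟶ ⦋m⦌) [Mono i] (ha : a.len ≤ n) : Phi n m :=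
  ⟨⟨a.len, Nat.lt_succ_of_le ha⟩, i.toOrderHom, i.toOrderHom.monotone,
    mono_iff_injective.1 inferInstance⟩

lemma toHom_ofMono {a : SimplexCategory} (i : a ⟶ ⦋m⦌) [Mono i] (ha : a.len ≤ n) :
    (ofMono i ha).toHom = i := by
  ext x : 3
  rfl

lemma toSimplexCategory_map_toHom {φ φ' : Phi n m} (g : φ ⟶ φ') :
    toSimplexCategory.map g ≫ φ'.toHom = φ.toHom := by
  ext x : 3
  exact congrFun g.2.2.2 x

/-- A factorization in the simplex category as a morphism of `D_m`. -/
def homMk {φ φ' : Phi n m} (f : toSimplexCategory.obj φ ⟶ toSimplexCategory.obj φ')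
    (w : f ≫ φ'.toHom = φ.toHom) : φ ⟶ φ' :=
  have comp_eq : φ'.2.1 ∘ f.toOrderHom = φ.2.1 := by
    funext x
    exact congr($w x)
  ⟨f.toOrderHom, f.toOrderHom.monotone, .of_comp (comp_eq ▸ φ.2.2.2), comp_eq⟩

variable (n m)

/-- The functor `toSimplexCategory` with values in the simplices of dimension `≤ n`. -/
def toTruncated : Phi n m ⥤ Truncated n :=
  ObjectProperty.lift _ toSimplexCategory fun φ => Fin.is_le φ.1

/-- The embedding of `D_m` into the category of all maps `[k] → [m]` with `k ≤ n`. -/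
def toCostructuredArrow : Phi n m ⥤ CostructuredArrow (Truncated.inclusion n) ⦋m⦌ :=
  (toTruncated n m).toCostructuredArrow _ _ toHom toSimplexCategory_map_toHom

variable {n m}

instance : Quiver.IsThin (Phi n m) := fun _ φ' =>
  ⟨fun f g => Subtype.ext <| φ'.2.2.2.comp_left (f.2.2.2.trans g.2.2.2.symm)⟩

instance (g : CostructuredArrow (Truncated.inclusion n) ⦋m⦌) (φ : Phi n m) :
    Subsingleton (g ⟶ (toCostructuredArrow n m).obj φ) :=
  ⟨fun f f' => CostructuredArrow.ext _ _ <| ObjectProperty.hom_ext _ <| (cancel_mono φ.toHom).1 <|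
    (CostructuredArrow.w f).trans (CostructuredArrow.w f').symm⟩

/-- The image of a map `g : [k] → [m]` with `k ≤ n`, as an object of `D_m`. -/
noncomputable def imageObj (g : CostructuredArrow (Truncated.inclusion n) ⦋m⦌) : Phi n m :=
  ofMono (image.ι g.hom) ((len_le_of_epi (factorThruImage g.hom)).trans g.left.property)

/-- The corestriction of a map `g : [k] → [m]` to its image. -/
noncomputable def toImageObj (g : CostructuredArrow (Truncated.inclusion n) ⦋m⦌) :
    g ⟶ (toCostructuredArrow n m).obj (imageObj g) :=
  CostructuredArrow.homMk (ObjectProperty.homMk (factorThruImage g.hom)) (image.fac g.hom)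

/-- A factorization of `g` through `φ : [i] → [m]` restricts to an inclusion of the image of `g`. -/
noncomputable def imageObjLift {g : CostructuredArrow (Truncated.inclusion n) ⦋m⦌} {φ : Phi n m}
    (f : g ⟶ (toCostructuredArrow n m).obj φ) : imageObj g ⟶ φ :=
  let factorisation : MonoFactorisation g.hom :=
    { I := toSimplexCategory.obj φ
      m := φ.toHom
      e := f.left.hom
      fac := CostructuredArrow.w f }
  homMk (image.lift factorisation) ((image.lift_fac factorisation).trans (toHom_ofMono _ _).symm)

noncomputable def isInitialToImageObj (g : CostructuredArrow (Truncated.inclusion n) ⦋m⦌) :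
    IsInitial (StructuredArrow.mk (toImageObj g)) :=
  IsInitial.ofUniqueHom
    (fun f => StructuredArrow.homMk (imageObjLift f.hom) (Subsingleton.elim _ _))
    fun _ _ => StructuredArrow.ext _ _ (Subsingleton.elim _ _)

instance : (toCostructuredArrow n m).Final :=
  have : (toCostructuredArrow n m).IsRightAdjoint :=
    isRightAdjoint_iff_hasInitial_structuredArrow.2 fun g => (isInitialToImageObj g).hasInitial
  inferInstance

variable (n m)

/-- The embedding of the opposite of `D_m` into the indexing category of the pointwise right Kan
extension computing `n`-coskeleta in degree `m`. -/
def toStructuredArrow : (Phi n m)ᵒᵖ ⥤ StructuredArrow (op ⦋m⦌) (Truncated.inclusion n).op :=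
  (toCostructuredArrow n m).op ⋙ CostructuredArrow.toStructuredArrow _ _

instance : (toStructuredArrow n m).Initial :=
  have : (CostructuredArrow.toStructuredArrow (Truncated.inclusion n) ⦋m⦌).IsEquivalence :=
    (costructuredArrowOpEquivalence _ _).isEquivalence_functor
  Functor.initial_comp _ _

end Phi

instance hasPointwiseRightKanExtension_inclusion_op (Z : (SimplexCategory.Truncated n)ᵒᵖ ⥤ C) :
    (SimplexCategory.Truncated.inclusion n).op.HasPointwiseRightKanExtension Z := fun a =>
  Functor.Initial.hasLimit_of_comp (Phi.toStructuredArrow n a.unop.len)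

/-- The restriction to the injections `[i] → [m]` of the cone exhibiting `(cosk_n X)_m` as a
pointwise right Kan extension. -/
noncomputable def coskCone : Cone ((Phi.toSimplexCategory (n := n) (m := m)).op ⋙ X) :=
  ((Functor.RightExtension.mk _ ((SimplicialObject.coskAdj n).counit.app
    ((SimplicialObject.truncation n).obj X))).coneAt (op (SimplexCategory.mk m))).whisker
      (Phi.toStructuredArrow n m)

/-- By initiality of `Phi.toStructuredArrow`, the limit over all maps `[k] → [m]`, `k ≤ n`, can be
computed over the injections alone. -/
noncomputable def isLimitCoskCone : IsLimit (coskCone n X m) :=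
  (Functor.Initial.isLimitWhiskerEquiv _ _).symm
    (Functor.isPointwiseRightKanExtensionOfIsRightKanExtension ((SimplicialObject.cosk n).obj X)
      ((SimplicialObject.coskAdj n).counit.app ((SimplicialObject.truncation n).obj X)) _)

-- `iota`, `sMap`, `tMap` are definitionally `coneToPi`, `sourceMap`, `targetMap` for `coskCone`.
theorem coskObjIsEqualizer_general :
    ∃ w : iota n X m ≫ sMap n X m = iota n X m ≫ tMap n X m,
      Nonempty (IsLimit (Fork.ofι (iota n X m) w)) :=
  ⟨coneToPi_condition (coskCone n X m), ⟨isLimitForkOfIsLimit (isLimitCoskCone n X m)⟩⟩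

/-- For `m > n`, `(cosk_n X)_m` is the equalizer of the two maps
`s, t : ∏_φ X_φ ⟶ ∏_α X_α` indexed by the category of injections `[i] → [m]`, `i ≤ n`. -/
theorem coskObjIsEqualizer (hm : n < m)
    (w : iota n X m ≫ sMap n X m = iota n X m ≫ tMap n X m) :
    Nonempty (IsLimit (Fork.ofι (iota n X m) w)) :=
  let ⟨_, isLimit⟩ := coskObjIsEqualizer_general n X m
  isLimit

end Stmt2
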